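/- Let m ≥ 4 and let π(x) = (1/2) g_m(x) + (1/2) u_m(x), where g_m(x) = (2π)^{−1/2} e^{−(x−m)²/2} and u_m(x) = e^{−d(x,[−m,2m])²/2} / (3m + √(2π)). Then π satisfies a log-Sobolev inequality with constant 324 m³: for every smooth compactly supported f : ℝ → ℝ, ∫ f² log( f² / ∫ f² π dx ) π dx ≤ 2 · 324 m³ · ∫ (f′)² π dx. -/

import Mathlib

open MeasureTheory Real

/-- The density of N(m, 1). -/
noncomputable def gaussAt (m x : ℝ) : ℝ := Real.exp (-(x - m) ^ 2 / 2) / Real.sqrt (2 * Real.pi)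

/-- The smoothed uniform density on [−m, 2m]. -/
noncomputable def smUnif (m x : ℝ) : ℝ :=
  Real.exp (-(Metric.infDist x (Set.Icc (-m) (2 * m))) ^ 2 / 2) / (3 * m + Real.sqrt (2 * Real.pi))

open intervalIntegral in
/-- Log-Sobolev on an interval for a positive function, by monotone transport. -/
lemma lsi_interval_pos (a b c : ℝ) (hab : a < b) (hc : 0 < c) (V V' g g' : ℝ → ℝ)
    (hV : ∀ x, HasDerivAt V (V' x) x) (hV' : Continuous V')
    (hconv : ∀ x y, V x + V' x * (y - x) + c / 2 * (y - x) ^ 2 ≤ V y)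
    (hg : ∀ x, HasDerivAt g (g' x) x) (hg' : Continuous g') (hpos : ∀ x, 0 < g x) (k : ℝ)
    (hk : 0 < k)
    (hkA : k * ∫ x in a..b, g x ^ 2 * exp (-V x) = ∫ x in a..b, exp (-V x)) :
    ∫ x in a..b, g x ^ 2 * log (k * g x ^ 2) * exp (-V x)
      ≤ 2 / c * ∫ x in a..b, g' x ^ 2 * exp (-V x) := by
  have cV : Continuous V := continuous_iff_continuousAt.2 fun x => (hV x).continuousAt
  have cg : Continuous g := continuous_iff_continuousAt.2 fun x => (hg x).continuousAt
  set H : ℝ → ℝ := fun x => ∫ t in a..x, exp (-V t) with hH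
  set G : ℝ → ℝ := fun x => ∫ t in a..x, k * g t ^ 2 * exp (-V t) with hG
  have cr : Continuous fun x => exp (-V x) := by fun_prop
  have cgr : Continuous fun x => k * g x ^ 2 * exp (-V x) := by fun_prop
  have dH : ∀ x, HasStrictDerivAt H (exp (-V x)) x := fun x =>
    integral_hasStrictDerivAt_right (cr.intervalIntegrable _ _)
      (cr.stronglyMeasurableAtFilter _ _) cr.continuousAt
  have dG : ∀ x, HasStrictDerivAt G (k * g x ^ 2 * exp (-V x)) x := fun x =>
    integral_hasStrictDerivAt_right (cgr.intervalIntegrable _ _)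
      (cgr.stronglyMeasurableAtFilter _ _) cgr.continuousAt
  have mH : StrictMono H := strictMono_of_hasDerivAt_pos (fun x => (dH x).hasDerivAt)
    (fun x => exp_pos _)
  have mG : StrictMono G := strictMono_of_hasDerivAt_pos (fun x => (dG x).hasDerivAt)
    (fun x => by have := hpos x; positivity)
  have cH : Continuous H := continuous_iff_continuousAt.2 fun x => (dH x).hasDerivAt.continuousAt
  have Ha : H a = 0 := by simp [hH]
  have Ga : G a = 0 := by simp [hG]
  have GHb : G b = H b := by
    simp only [hG, hH, ← hkA, ← intervalIntegral.integral_const_mul, mul_assoc]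
  set T : ℝ → ℝ := fun x => Function.invFun H (G x) with hT
  have HT : ∀ x ∈ Set.Icc a b, H (T x) = G x := by
    intro x hx
    have h1 : G x ∈ Set.Icc (H a) (H b) := by
      rw [Ha, ← Ga, ← GHb]
      exact ⟨mG.monotone hx.1, mG.monotone hx.2⟩
    obtain ⟨t, -, ht⟩ := intermediate_value_Icc hab.le cH.continuousOn h1
    exact Function.invFun_eq ⟨t, ht⟩
  have Ta : T a = a := mH.injective (by rw [HT a ⟨le_rfl, hab.le⟩, Ga, Ha])
  have Tb : T b = b := mH.injective (by rw [HT b ⟨hab.le, le_rfl⟩, GHb])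
  have dT : ∀ x ∈ Set.Icc a b,
      HasDerivAt T ((exp (-V (T x)))⁻¹ * (k * g x ^ 2 * exp (-V x))) x := by
    intro x hx
    have h3 : HasDerivAt (Function.invFun H) (exp (-V (T x)))⁻¹ (H (T x)) :=
      ((dH (T x)).to_local_left_inverse (exp_pos _).ne' (Filter.Eventually.of_forall
        (Function.leftInverse_invFun mH.injective))).hasDerivAt
    rw [HT x hx] at h3
    exact h3.comp x (dG x).hasDerivAt
  have cT : ContinuousOn T (Set.Icc a b) := fun x hx => (dT x hx).continuousAt.continuousWithinAt
  set T' : ℝ → ℝ := fun x => (exp (-V (T x)))⁻¹ * (k * g x ^ 2 * exp (-V x)) with hT'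
  have cT' : ContinuousOn T' (Set.Icc a b) := by
    have : ContinuousOn (fun x => V (T x)) (Set.Icc a b) := cV.comp_continuousOn cT
    refine ContinuousOn.mul (ContinuousOn.inv₀ this.neg.rexp fun x _ => (exp_pos _).ne')
      cgr.continuousOn
  set B : ℝ → ℝ := fun x => g x ^ 2 * (T x - x) * exp (-V x) with hB
  set B' : ℝ → ℝ := fun x => (2 * g x * g' x * (T x - x) + g x ^ 2 * (T' x - 1)) * exp (-V x)
    + g x ^ 2 * (T x - x) * (exp (-V x) * (-V' x)) with hB'
  have dB : ∀ x ∈ Set.uIcc a b, HasDerivAt B (B' x) x := by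
    intro x hx
    rw [Set.uIcc_of_le hab.le] at hx
    have := ((((hg x).pow 2).mul ((dT x hx).sub (hasDerivAt_id x))).mul (hV x).neg.exp)
    exact this.congr_deriv (by simp [hB', hT'])
  have cB' : ContinuousOn B' (Set.uIcc a b) := by
    rw [Set.uIcc_of_le hab.le]
    have e1 := cg.continuousOn (s := Set.Icc a b)
    have e2 := hg'.continuousOn (s := Set.Icc a b)
    have e3 := hV'.continuousOn (s := Set.Icc a b)
    have e4 := cr.continuousOn (s := Set.Icc a b)
    simp only [hB']
    fun_prop
  have iB := integral_eq_sub_of_hasDerivAt dB cB'.intervalIntegrable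
  have iB0 : ∫ x in a..b, B' x = 0 := by rw [iB]; simp [hB, Ta, Tb]
  have clog : Continuous fun x => g x ^ 2 * log (k * g x ^ 2) * exp (-V x) := by
    have : Continuous fun x => log (k * g x ^ 2) :=
      Continuous.log (by fun_prop) (fun x => by have := hpos x; positivity)
    fun_prop
  have cgp : Continuous fun x => g' x ^ 2 * exp (-V x) := by fun_prop
  have key : ∫ x in a..b, g x ^ 2 * log (k * g x ^ 2) * exp (-V x)
      ≤ ∫ x in a..b, (B' x + 2 / c * (g' x ^ 2 * exp (-V x))) := by
    refine integral_mono_on hab.le (clog.intervalIntegrable _ _)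
      (cB'.intervalIntegrable.add ((cgp.intervalIntegrable _ _).const_mul (2 / c))) ?_
    intro x hx
    have hgx := hpos x
    have hT'pos : 0 < T' x := by simp only [hT']; positivity
    have e1 : k * g x ^ 2 = T' x * exp (-V (T x)) * exp (V x) := by
      simp only [hT', exp_neg]
      field_simp
    have e2 : log (k * g x ^ 2) = log (T' x) - V (T x) + V x := by
      rw [e1, log_mul (by positivity) (by positivity), log_mul (by positivity) (by positivity)]
      simp; ring
    have e3 := log_le_sub_one_of_pos hT'pos
    have e4 := hconv x (T x)
    have e5 : log (k * g x ^ 2) ≤ T' x - 1 - V' x * (T x - x) - c / 2 * (T x - x) ^ 2 := by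
      rw [e2]; linarith
    have e6 : 0 ≤ g x ^ 2 * (c / 2 * (T x - x) ^ 2) + 2 * g x * g' x * (T x - x)
        + 2 / c * g' x ^ 2 := by
      have : g x ^ 2 * (c / 2 * (T x - x) ^ 2) + 2 * g x * g' x * (T x - x)
        + 2 / c * g' x ^ 2 = (c * g x * (T x - x) + 2 * g' x) ^ 2 / (2 * c) := by
        field_simp; ring
      rw [this]; positivity
    have e7 : g x ^ 2 * log (k * g x ^ 2) ≤ 2 * g x * g' x * (T x - x) + g x ^ 2 * (T' x - 1)
        + g x ^ 2 * (T x - x) * (-V' x) + 2 / c * g' x ^ 2 := by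
      have := mul_le_mul_of_nonneg_left e5 (sq_nonneg (g x))
      linarith
    have := mul_le_mul_of_nonneg_right e7 (exp_pos (-V x)).le
    simp only [hB']
    linarith
  rw [integral_add cB'.intervalIntegrable ((cgp.intervalIntegrable _ _).const_mul (2 / c)),
    iB0, zero_add, intervalIntegral.integral_const_mul] at key
  exact key

lemma lsi_interval_eps (a b c : ℝ) (hab : a < b) (hc : 0 < c) (V V' f f' : ℝ → ℝ)
    (hV : ∀ x, HasDerivAt V (V' x) x) (hV' : Continuous V')
    (hconv : ∀ x y, V x + V' x * (y - x) + c / 2 * (y - x) ^ 2 ≤ V y)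
    (hf : ∀ x, HasDerivAt f (f' x) x) (hf' : Continuous f') (e : ℝ) (he : 0 < e) :
    (∫ x in a..b, (f x ^ 2 + e) * log (f x ^ 2 + e) * exp (-V x))
      - (∫ x in a..b, (f x ^ 2 + e) * exp (-V x)) * log (∫ x in a..b, (f x ^ 2 + e) * exp (-V x))
      + (∫ x in a..b, (f x ^ 2 + e) * exp (-V x)) * log (∫ x in a..b, exp (-V x))
      ≤ 2 / c * ∫ x in a..b, f' x ^ 2 * exp (-V x) := by
  have cV : Continuous V := continuous_iff_continuousAt.2 fun x => (hV x).continuousAt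
  have cf : Continuous f := continuous_iff_continuousAt.2 fun x => (hf x).continuousAt
  have hp : ∀ x, 0 < f x ^ 2 + e := fun x => by positivity
  set g : ℝ → ℝ := fun x => sqrt (f x ^ 2 + e) with hg
  have g2 : ∀ x, g x ^ 2 = f x ^ 2 + e := fun x => sq_sqrt (hp x).le
  have gp : ∀ x, 0 < g x := fun x => sqrt_pos.2 (hp x)
  have cg : Continuous g := by simp only [hg]; fun_prop
  set A := ∫ x in a..b, (f x ^ 2 + e) * exp (-V x) with hA
  set Z := ∫ x in a..b, exp (-V x) with hZ
  have cA : Continuous fun x => (f x ^ 2 + e) * exp (-V x) := by fun_prop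
  have cZ : Continuous fun x => exp (-V x) := by fun_prop
  have Ap : 0 < A := intervalIntegral.intervalIntegral_pos_of_pos (cA.intervalIntegrable _ _)
    (fun x => mul_pos (hp x) (exp_pos _)) hab
  have Zp : 0 < Z := intervalIntegral.intervalIntegral_pos_of_pos (cZ.intervalIntegrable _ _)
    (fun x => exp_pos _) hab
  have cg' : Continuous fun x => f x * f' x / g x :=
    (cf.mul hf').div cg (fun x => (gp x).ne')
  have main := lsi_interval_pos a b c hab hc V V' g (fun x => f x * f' x / g x) hV hV' hconv
    (fun x => by
      have := (((hf x).pow 2).add_const e).sqrt (hp x).ne'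
      refine this.congr_deriv ?_
      have h := (gp x).ne'
      simp only [hg] at h ⊢
      simp only [Pi.pow_apply]
      push_cast
      field_simp) cg' gp (Z / A) (by positivity)
    (by simp only [g2]; rw [← hA, ← hZ]; field_simp)
  simp only [g2] at main
  have clog : Continuous fun x => (f x ^ 2 + e) * log (f x ^ 2 + e) * exp (-V x) := by
    have : Continuous fun x => log (f x ^ 2 + e) :=
      Continuous.log (by fun_prop) (fun x => (hp x).ne')
    fun_prop
  have e1 : ∫ x in a..b, (f x ^ 2 + e) * log (Z / A * (f x ^ 2 + e)) * exp (-V x)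
      = (∫ x in a..b, (f x ^ 2 + e) * log (f x ^ 2 + e) * exp (-V x))
        + (log Z - log A) * A := by
    conv_rhs => rw [hA]
    rw [← intervalIntegral.integral_const_mul, ← intervalIntegral.integral_add
      (clog.intervalIntegrable _ _) ((cA.intervalIntegrable _ _).const_mul _)]
    congr 1; ext x
    rw [log_mul (by positivity) (hp x).ne', log_div Zp.ne' Ap.ne']
    ring
  have e2 : ∫ x in a..b, (f x * f' x / g x) ^ 2 * exp (-V x)
      ≤ ∫ x in a..b, f' x ^ 2 * exp (-V x) := by
    refine intervalIntegral.integral_mono_on hab.le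
      (Continuous.intervalIntegrable (by fun_prop) _ _)
      (Continuous.intervalIntegrable (by fun_prop) _ _) ?_
    intro x _
    refine mul_le_mul_of_nonneg_right ?_ (exp_pos _).le
    rw [div_pow, g2, div_le_iff₀ (hp x)]
    nlinarith [mul_nonneg (sq_nonneg (f' x)) he.le]
  rw [e1] at main
  have := mul_le_mul_of_nonneg_left e2 (by positivity : 0 ≤ 2 / c)
  linarith

lemma lsi_interval (a b c : ℝ) (hab : a < b) (hc : 0 < c) (V V' f f' : ℝ → ℝ)
    (hV : ∀ x, HasDerivAt V (V' x) x) (hV' : Continuous V')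
    (hconv : ∀ x y, V x + V' x * (y - x) + c / 2 * (y - x) ^ 2 ≤ V y)
    (hf : ∀ x, HasDerivAt f (f' x) x) (hf' : Continuous f') :
    (∫ x in a..b, f x ^ 2 * log (f x ^ 2) * exp (-V x))
      - (∫ x in a..b, f x ^ 2 * exp (-V x)) * log (∫ x in a..b, f x ^ 2 * exp (-V x))
      + (∫ x in a..b, f x ^ 2 * exp (-V x)) * log (∫ x in a..b, exp (-V x))
      ≤ 2 / c * ∫ x in a..b, f' x ^ 2 * exp (-V x) := by
  have cV : Continuous V := continuous_iff_continuousAt.2 fun x => (hV x).continuousAt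
  have cf : Continuous f := continuous_iff_continuousAt.2 fun x => (hf x).continuousAt
  have c1 : Continuous fun e : ℝ => ∫ x in a..b, (f x ^ 2 + e) * log (f x ^ 2 + e) * exp (-V x) := by
    apply intervalIntegral.continuous_parametric_intervalIntegral_of_continuous'
    have : Continuous fun p : ℝ × ℝ => (f p.2 ^ 2 + p.1) * log (f p.2 ^ 2 + p.1) :=
      continuous_mul_log.comp (by fun_prop : Continuous fun p : ℝ × ℝ => f p.2 ^ 2 + p.1)
    exact this.mul (by fun_prop)
  have c2 : Continuous fun e : ℝ => ∫ x in a..b, (f x ^ 2 + e) * exp (-V x) := by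
    apply intervalIntegral.continuous_parametric_intervalIntegral_of_continuous'
    simp only [Function.uncurry_def]
    fun_prop
  have c3 := (c1.sub (continuous_mul_log.comp c2)).add (c2.mul_const (log (∫ x in a..b, exp (-V x))))
  have t := (c3.tendsto 0).mono_left (nhdsWithin_le_nhds (s := Set.Ioi 0))
  have := le_of_tendsto t (b := 2 / c * ∫ x in a..b, f' x ^ 2 * exp (-V x)) (by
    filter_upwards [self_mem_nhdsWithin] with e he
    exact lsi_interval_eps a b c hab hc V V' f f' hV hV' hconv hf hf' e he)
  simpa using this

/-- Holley-Stroock on an interval. -/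
lemma hs_interval (a b c : ℝ) (hab : a < b) (hc : 0 < c) (V V' f f' p : ℝ → ℝ)
    (hV : ∀ x, HasDerivAt V (V' x) x) (hV' : Continuous V')
    (hconv : ∀ x y, V x + V' x * (y - x) + c / 2 * (y - x) ^ 2 ≤ V y)
    (hf : ∀ x, HasDerivAt f (f' x) x) (hf' : Continuous f') (hp : Continuous p)
    (pp : ∀ x, 0 < p x) (K K' : ℝ) (hK : 0 < K) (h1 : ∀ x, p x ≤ K * exp (-V x))
    (h2 : ∀ x, exp (-V x) ≤ K' * p x) (hA : 0 < ∫ x in a..b, f x ^ 2 * p x) :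
    (∫ x in a..b, f x ^ 2 * log (f x ^ 2) * p x)
      - (∫ x in a..b, f x ^ 2 * p x) * log (∫ x in a..b, f x ^ 2 * p x)
      + (∫ x in a..b, f x ^ 2 * p x) * log (∫ x in a..b, p x)
      ≤ 2 * (K * K' / c) * ∫ x in a..b, f' x ^ 2 * p x := by
  have cV : Continuous V := continuous_iff_continuousAt.2 fun x => (hV x).continuousAt
  have cf : Continuous f := continuous_iff_continuousAt.2 fun x => (hf x).continuousAt
  have cfl : Continuous fun x => f x ^ 2 * log (f x ^ 2) :=
    continuous_mul_log.comp (by fun_prop : Continuous fun x => f x ^ 2)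
  have base := lsi_interval a b c hab hc V V' f f' hV hV' hconv hf hf'
  set A := ∫ x in a..b, f x ^ 2 * exp (-V x) with hAd
  set Z := ∫ x in a..b, exp (-V x) with hZd
  set B := ∫ x in a..b, f x ^ 2 * p x with hBd
  set P := ∫ x in a..b, p x with hPd
  have Zp : 0 < Z := intervalIntegral.intervalIntegral_pos_of_pos
    (Continuous.intervalIntegrable (by fun_prop) _ _) (fun x => exp_pos _) hab
  have Pp : 0 < P := intervalIntegral.intervalIntegral_pos_of_pos
    (hp.intervalIntegrable _ _) pp hab
  have Ap : 0 < A := by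
    have : B ≤ K * A := by
      rw [hBd, hAd, ← intervalIntegral.integral_const_mul]
      refine intervalIntegral.integral_mono_on hab.le
        (Continuous.intervalIntegrable (by fun_prop) _ _)
        (Continuous.intervalIntegrable (by fun_prop) _ _) ?_
      intro x _
      nlinarith [h1 x, sq_nonneg (f x), mul_le_mul_of_nonneg_left (h1 x) (sq_nonneg (f x))]
    by_contra h
    nlinarith
  set t := A / Z with ht
  have tp : 0 < t := by positivity
  have expand : ∀ q : ℝ → ℝ, Continuous q →
      ∫ x in a..b, (f x ^ 2 * log (f x ^ 2) - f x ^ 2 * log t - f x ^ 2 + t) * q x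
      = (∫ x in a..b, f x ^ 2 * log (f x ^ 2) * q x) - (log t + 1) * (∫ x in a..b, f x ^ 2 * q x)
        + t * ∫ x in a..b, q x := by
    intro q hq
    rw [← intervalIntegral.integral_const_mul, ← intervalIntegral.integral_const_mul,
      ← intervalIntegral.integral_sub (Continuous.intervalIntegrable (by fun_prop) _ _)
       (Continuous.intervalIntegrable (by fun_prop) _ _),
      ← intervalIntegral.integral_add (Continuous.intervalIntegrable (by fun_prop) _ _)
       (Continuous.intervalIntegrable (by fun_prop) _ _)]
    congr 1; ext x; ring
  have nn : ∀ x, 0 ≤ f x ^ 2 * log (f x ^ 2) - f x ^ 2 * log t - f x ^ 2 + t := by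
    intro x
    rcases eq_or_ne (f x) 0 with h0 | h0
    · simp [h0, tp.le]
    · have hs : 0 < f x ^ 2 := by positivity
      have := log_le_sub_one_of_pos (div_pos tp hs)
      rw [log_div tp.ne' hs.ne'] at this
      have h3 := mul_le_mul_of_nonneg_left this hs.le
      have h4 : f x ^ 2 * (t / f x ^ 2 - 1) = t - f x ^ 2 := by field_simp
      linarith
  have s1 : ∫ x in a..b, (f x ^ 2 * log (f x ^ 2) - f x ^ 2 * log t - f x ^ 2 + t) * p x
      ≤ K * ∫ x in a..b, (f x ^ 2 * log (f x ^ 2) - f x ^ 2 * log t - f x ^ 2 + t) * exp (-V x) := by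
    rw [← intervalIntegral.integral_const_mul]
    refine intervalIntegral.integral_mono_on hab.le
        (Continuous.intervalIntegrable (by fun_prop) _ _)
        (Continuous.intervalIntegrable (by fun_prop) _ _) ?_
    intro x _
    have := mul_le_mul_of_nonneg_left (h1 x) (nn x)
    linarith
  have s2 : ∫ x in a..b, f' x ^ 2 * exp (-V x) ≤ K' * ∫ x in a..b, f' x ^ 2 * p x := by
    rw [← intervalIntegral.integral_const_mul]
    refine intervalIntegral.integral_mono_on hab.le
        (Continuous.intervalIntegrable (by fun_prop) _ _)
        (Continuous.intervalIntegrable (by fun_prop) _ _) ?_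
    intro x _
    have := mul_le_mul_of_nonneg_left (h2 x) (sq_nonneg (f' x))
    linarith
  rw [expand p hp, expand (fun x => exp (-V x)) (by fun_prop)] at s1
  rw [← hAd, ← hBd, ← hZd, ← hPd] at s1
  have lt : log t = log A - log Z := log_div Ap.ne' Zp.ne'
  have tZ : t * Z = A := by rw [ht]; field_simp
  have s3 : (∫ x in a..b, f x ^ 2 * log (f x ^ 2) * exp (-V x)) - (log t + 1) * A + t * Z
      ≤ 2 / c * (K' * ∫ x in a..b, f' x ^ 2 * p x) := by
    have := mul_le_mul_of_nonneg_left s2 (by positivity : 0 ≤ 2 / c)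
    rw [tZ, lt]; linarith
  have s4 := mul_le_mul_of_nonneg_left s3 hK.le
  have s5 : B * (log t + log P - log B) ≤ t * P - B := by
    have := log_le_sub_one_of_pos (div_pos (mul_pos tp Pp) hA)
    rw [log_div (mul_pos tp Pp).ne' hA.ne', log_mul tp.ne' Pp.ne'] at this
    have h3 := mul_le_mul_of_nonneg_left this hA.le
    have h4 : B * (t * P / B - 1) = t * P - B := by field_simp
    linarith
  have s6 : K * (2 / c * (K' * ∫ x in a..b, f' x ^ 2 * p x))
    = 2 * (K * K' / c) * ∫ x in a..b, f' x ^ 2 * p x := by ring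
  linarith

lemma hs_full (c : ℝ) (hc : 0 < c) (V V' f p : ℝ → ℝ)
    (hV : ∀ x, HasDerivAt V (V' x) x) (hV' : Continuous V')
    (hconv : ∀ x y, V x + V' x * (y - x) + c / 2 * (y - x) ^ 2 ≤ V y)
    (hf : ContDiff ℝ (⊤ : ℕ∞) f) (hs : HasCompactSupport f) (hp : Continuous p)
    (pp : ∀ x, 0 < p x) (K K' : ℝ) (hK : 0 < K) (hK' : 0 < K') (h1 : ∀ x, p x ≤ K * exp (-V x))
    (h2 : ∀ x, exp (-V x) ≤ K' * p x) (pint : Integrable p) (p1 : ∫ x, p x = 1) :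
    (∫ x, f x ^ 2 * log (f x ^ 2 / ∫ y, f y ^ 2 * p y) * p x)
      ≤ 2 * (K * K' / c) * ∫ x, deriv f x ^ 2 * p x := by
  have cf := hf.continuous
  have df : ∀ x, HasDerivAt f (deriv f x) x := fun x =>
    (hf.differentiable (by simp)).differentiableAt.hasDerivAt
  have cf' : Continuous (deriv f) := hf.continuous_deriv (by simp)
  have cfl : Continuous fun x => f x ^ 2 * log (f x ^ 2) :=
    continuous_mul_log.comp (by fun_prop : Continuous fun x => f x ^ 2)
  have rhs0 : 0 ≤ 2 * (K * K' / c) * ∫ x, deriv f x ^ 2 * p x := by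
    have : 0 ≤ ∫ x, deriv f x ^ 2 * p x :=
      integral_nonneg fun x => mul_nonneg (sq_nonneg _) (pp x).le
    positivity
  set B := ∫ y, f y ^ 2 * p y with hB
  have B0 : 0 ≤ B := integral_nonneg fun x => mul_nonneg (sq_nonneg _) (pp x).le
  rcases B0.eq_or_lt with hz | hpos
  · rw [← hz]; simpa using rhs0
  have k1 : HasCompactSupport fun x => f x ^ 2 * p x :=
    hs.mono (fun x hx => by contrapose! hx; simp_all)
  have k2 : HasCompactSupport fun x => f x ^ 2 * log (f x ^ 2) * p x :=
    hs.mono (fun x hx => by contrapose! hx; simp_all)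
  have k3 : HasCompactSupport fun x => deriv f x ^ 2 * p x :=
    hs.deriv.mono (fun x hx => by contrapose! hx; simp_all)
  have i1 : Integrable fun x => f x ^ 2 * p x :=
    Continuous.integrable_of_hasCompactSupport (by fun_prop) k1
  have i2 : Integrable fun x => f x ^ 2 * log (f x ^ 2) * p x :=
    Continuous.integrable_of_hasCompactSupport (by fun_prop) k2
  have i3 : Integrable fun x => deriv f x ^ 2 * p x :=
    Continuous.integrable_of_hasCompactSupport (by fun_prop) k3
  have e : ∫ x, f x ^ 2 * log (f x ^ 2 / B) * p x
      = (∫ x, f x ^ 2 * log (f x ^ 2) * p x) - B * log B := by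
    rw [mul_comm B, hB, ← integral_const_mul, ← integral_sub i2 (i1.const_mul _)]
    congr 1; ext x
    rcases eq_or_ne (f x) 0 with h0 | h0
    · simp [h0]
    · rw [log_div (by positivity) hpos.ne']; ring
  have tt : ∀ q : ℝ → ℝ, Integrable q →
      Filter.Tendsto (fun n : ℝ => ∫ x in (-n)..n, q x) Filter.atTop (nhds (∫ x, q x)) :=
    fun q hq => intervalIntegral_tendsto_integral hq Filter.tendsto_neg_atTop_atBot Filter.tendsto_id
  have t1 := tt _ i1
  have t2 := tt _ i2
  have t3 := tt _ i3
  have t4 := tt _ pint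
  rw [p1] at t4
  have L := (t2.sub ((continuous_mul_log.tendsto _).comp t1)).add (t1.mul (t4.log one_ne_zero))
  have R := t3.const_mul (2 * (K * K' / c))
  have := le_of_tendsto_of_tendsto L R (by
    filter_upwards [Filter.eventually_gt_atTop 0, t1.eventually (lt_mem_nhds hpos)] with n hn hn2
    exact hs_interval (-n) n c (by linarith) hc V V' f (deriv f) p hV hV' hconv df cf' hp pp K K'
      hK h1 h2 hn2)
  rw [e]
  simpa using this

lemma pos_sq_conv (x y : ℝ) :
    (max x 0) ^ 2 + 2 * max x 0 * (y - x) ≤ (max y 0) ^ 2 := by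
  rcases le_total x 0 with h | h <;> rcases le_total y 0 with h' | h' <;>
    simp only [max_eq_left, max_eq_right, h, h'] <;> nlinarith [sq_nonneg (x - y)]

lemma pos_sq_deriv (x : ℝ) : HasDerivAt (fun y : ℝ => (max y 0) ^ 2) (2 * max x 0) x := by
  rw [hasDerivAt_iff_isLittleO]
  refine Asymptotics.IsBigO.trans_isLittleO (g := fun y => (y - x) ^ 2) ?_ ?_
  · refine Asymptotics.IsBigO.of_bound 1 (Filter.Eventually.of_forall fun y => ?_)
    rw [one_mul, Real.norm_of_nonneg (sq_nonneg (y - x)), Real.norm_eq_abs, abs_le, smul_eq_mul]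
    constructor
    · nlinarith [pos_sq_conv x y, sq_nonneg (y - x)]
    · rcases le_total x 0 with h | h <;> rcases le_total y 0 with h' | h' <;>
        simp only [max_eq_left, max_eq_right, h, h'] <;> nlinarith
  · have : Filter.Tendsto (fun y : ℝ => y - x) (nhds x) (nhds 0) := by
      have : Continuous fun y : ℝ => y - x := by fun_prop
      simpa using this.tendsto x
    have h := ((Asymptotics.isLittleO_pow_id (𝕜 := ℝ) (n := 2) (by norm_num)).comp_tendsto this)
    exact h

lemma infDist_Icc_sq (m x : ℝ) (hm : 4 ≤ m) :
    (Metric.infDist x (Set.Icc (-m) (2 * m))) = max (|x - m / 2| - 3 / 2 * m) 0 := by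
  have ne : (Set.Icc (-m) (2 * m)).Nonempty := ⟨0, by constructor <;> linarith⟩
  apply le_antisymm
  · have hmem : max (-m) (min x (2 * m)) ∈ Set.Icc (-m) (2 * m) :=
      ⟨le_max_left _ _, max_le (by linarith) (min_le_right _ _)⟩
    refine (Metric.infDist_le_dist_of_mem hmem).trans ?_
    rw [Real.dist_eq]
    rcases le_total x (2 * m) with h | h
    · rw [min_eq_left h]
      rcases le_total (-m) x with h' | h'
      · rw [max_eq_right h']; simp
      · rw [max_eq_left h']
        apply le_max_of_le_left
        rw [abs_of_nonpos (by linarith), abs_of_nonpos (by linarith)]; linarith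
    · rw [min_eq_right h, max_eq_right (by linarith)]
      apply le_max_of_le_left
      rw [abs_of_nonneg (by linarith), abs_of_nonneg (by linarith)]; linarith
  · refine max_le ?_ Metric.infDist_nonneg
    rw [Metric.le_infDist ne]
    intro y hy
    have h1 : |y - m / 2| ≤ 3 / 2 * m := abs_le.2 ⟨by linarith [hy.1], by linarith [hy.2]⟩
    have h2 := abs_sub_le x y (m / 2)
    rw [Real.dist_eq]; linarith

/-- The comparison of the two potentials, in terms of `z = |y|`. -/
lemma pot_compare (a s r z : ℝ) (ha : 0 < a) (ha2 : a ≤ 1 / 2) (hs : 0 < s)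
    (hr : (1 - 2 * a) * r = s) (hr0 : 0 < r) (har : a * r ^ 2 ≤ 1) (hz : 0 ≤ z) :
    (max (z - s) 0) ^ 2 / 2 ≤ a * z ^ 2 + (1 / 2 - a) * (max (z - r) 0) ^ 2 ∧
    a * z ^ 2 + (1 / 2 - a) * (max (z - r) 0) ^ 2 ≤ (max (z - s) 0) ^ 2 / 2 + 1 := by
  have sr : s ≤ r := by nlinarith
  rcases le_total z r with h | h
  · rw [max_eq_right (by linarith : z - r ≤ 0)]
    have hzr : a * z ^ 2 ≤ a * r ^ 2 := by gcongr
    constructor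
    · rcases le_total z s with h' | h'
      · rw [max_eq_right (by linarith)]; nlinarith [mul_nonneg ha.le (sq_nonneg z)]
      · rw [max_eq_left (by linarith)]
        have h3 : z - s ≤ 2 * a * z := by nlinarith
        have h4 : (z - s) ^ 2 ≤ (2 * a * z) ^ 2 := by gcongr
        nlinarith [mul_nonneg (mul_nonneg ha.le (sq_nonneg z)) (by linarith : 0 ≤ 1 - 2 * a)]
    · nlinarith [sq_nonneg (max (z - s) 0)]
  · rw [max_eq_left (by linarith : 0 ≤ z - r), max_eq_left (by linarith : 0 ≤ z - s)]
    have key : a * z ^ 2 + (1 / 2 - a) * (z - r) ^ 2 - (z - s) ^ 2 / 2 = s * (a * r) := by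
      subst hr; ring
    have : s * (a * r) ≤ a * r ^ 2 := by nlinarith [mul_pos ha hr0]
    have : 0 < s * (a * r) := by positivity
    constructor <;> linarith

lemma pos_sq_abs (y r : ℝ) (hr : 0 ≤ r) :
    (max (y - r) 0) ^ 2 + (max (-y - r) 0) ^ 2 = (max (|y| - r) 0) ^ 2 := by
  rcases le_total 0 y with h | h
  · rw [abs_of_nonneg h, max_eq_right (by linarith : -y - r ≤ 0)]; simp
  · rw [abs_of_nonpos h, max_eq_right (by linarith : y - r ≤ 0)]; simp

lemma integral_half_gauss : ∫ x in Set.Ioi (0:ℝ), exp (-x ^ 2 / 2) = sqrt (2 * π) / 2 := by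
  have := integral_gaussian_Ioi (1 / 2)
  rw [show π / (1 / 2) = 2 * π by ring] at this
  rw [← this]; congr 1; ext x; congr 1; ring

lemma integrable_gauss0 : Integrable fun x : ℝ => exp (-x ^ 2 / 2) := by
  have := integrable_exp_neg_mul_sq (b := 1 / 2) (by norm_num)
  convert this using 3; ring

lemma smUnif_int (m : ℝ) (hm : 4 ≤ m) : Integrable (smUnif m) ∧ ∫ x, smUnif m x = 1 := by
  have hsq : 0 < sqrt (2 * π) := by positivity
  set h : ℝ → ℝ := fun x => exp (-(max (|x - m / 2| - 3 / 2 * m) 0) ^ 2 / 2) with hh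
  have hsm : smUnif m = fun x => h x / (3 * m + sqrt (2 * π)) := by
    ext x; simp only [smUnif, infDist_Icc_sq m x hm, hh]
  have eR : ∀ x ∈ Set.Ioi (2 * m), exp (-(x - 2 * m) ^ 2 / 2) = h x := by
    intro x hx
    have hx : 2 * m < x := hx
    simp only [hh]
    rw [abs_of_nonneg (by linarith), max_eq_left (by linarith)]; congr 1; ring
  have eL : ∀ x ∈ Set.Iic (-m), exp (-(-m - x) ^ 2 / 2) = h x := by
    intro x hx
    have hx : x ≤ -m := hx
    simp only [hh]
    rw [abs_of_nonpos (by linarith), max_eq_left (by linarith)]; congr 1; ring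
  have eM : ∀ x ∈ Set.Ioc (-m) (2 * m), 1 = h x := by
    intro x hx
    simp only [hh]
    have : |x - m / 2| ≤ 3 / 2 * m := abs_le.2 ⟨by linarith [hx.1], by linarith [hx.2]⟩
    rw [max_eq_right (by linarith)]; simp
  have iR : IntegrableOn h (Set.Ioi (2 * m)) :=
    ((integrable_gauss0.comp_sub_right (2 * m)).integrableOn).congr_fun eR measurableSet_Ioi
  have iL : IntegrableOn h (Set.Iic (-m)) :=
    ((integrable_gauss0.comp_sub_left (-m)).integrableOn).congr_fun eL measurableSet_Iic
  have iM : IntegrableOn h (Set.Ioc (-m) (2 * m)) :=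
    (integrableOn_const (by simp)).congr_fun eM measurableSet_Ioc
  have u1 : Set.Iic (-m) ∪ Set.Ioc (-m) (2 * m) = Set.Iic (2 * m) :=
    Set.Iic_union_Ioc_eq_Iic (by linarith)
  have iL2 : IntegrableOn h (Set.Iic (2 * m)) := u1 ▸ iL.union iM
  have ih : Integrable h := by
    rw [← integrableOn_univ, ← Set.Iic_union_Ioi (a := 2 * m)]; exact iL2.union iR
  have vR : ∫ x in Set.Ioi (2 * m), h x = sqrt (2 * π) / 2 := by
    rw [← setIntegral_congr_fun measurableSet_Ioi eR, ← integral_half_gauss]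
    have := integral_sub_right_eq_self ((Set.Ioi 0).indicator fun x : ℝ => exp (-x ^ 2 / 2))
      (μ := volume) (2 * m)
    rw [integral_indicator measurableSet_Ioi] at this
    rw [← this, ← integral_indicator measurableSet_Ioi]
    congr 1; ext x
    simp [Set.indicator_apply]
  have vL : ∫ x in Set.Iic (-m), h x = sqrt (2 * π) / 2 := by
    rw [← setIntegral_congr_fun measurableSet_Iic eL, ← integral_half_gauss]
    have := integral_sub_left_eq_self ((Set.Ici 0).indicator fun x : ℝ => exp (-x ^ 2 / 2))
      volume (-m)
    rw [integral_indicator measurableSet_Ici, integral_Ici_eq_integral_Ioi] at this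
    rw [← this, ← integral_indicator measurableSet_Iic]
    congr 1; ext x
    have : x ≤ -m ↔ 0 ≤ -m - x := by constructor <;> intro h <;> linarith
    simp only [Set.indicator_apply, Set.mem_Iic, Set.mem_Ici, this]
  have vM : ∫ x in Set.Ioc (-m) (2 * m), h x = 3 * m := by
    rw [← setIntegral_congr_fun measurableSet_Ioc eM]
    simp; rw [max_eq_left] <;> linarith
  have vh : ∫ x, h x = 3 * m + sqrt (2 * π) := by
    rw [← intervalIntegral.integral_Iic_add_Ioi iL2 iR, ← u1,
      setIntegral_union (Set.Iic_disjoint_Ioc le_rfl) measurableSet_Ioc iL iM, vR, vL, vM]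
    ring
  rw [hsm]
  refine ⟨ih.div_const _, ?_⟩
  rw [integral_div, vh, div_self (by positivity)]

lemma gaussAt_int (m : ℝ) : Integrable (gaussAt m) ∧ ∫ x, gaussAt m x = 1 := by
  have e : gaussAt m = fun x => exp (-(x - m) ^ 2 / 2) / sqrt (2 * π) := rfl
  have i := integrable_gauss0.comp_sub_right m
  rw [e]
  refine ⟨i.div_const _, ?_⟩
  rw [integral_div, integral_sub_right_eq_self (fun x => exp (-x ^ 2 / 2)) m]
  have := integral_gaussian (1 / 2)
  rw [show π / (1 / 2) = 2 * π by ring] at this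
  rw [show (∫ x : ℝ, exp (-x ^ 2 / 2)) = sqrt (2 * π) by
    rw [← this]; congr 1; ext x; congr 1; ring]
  exact div_self (by positivity)

/-- For m ≥ 4, the target π = (1/2)N(m,1) + (1/2)u_m satisfies a
log-Sobolev inequality with constant 324m³. -/
theorem half_mixture_log_sobolev
    (m : ℝ) (hm : 4 ≤ m) :
    ∀ f : ℝ → ℝ, ContDiff ℝ (⊤ : ℕ∞) f → HasCompactSupport f →
      (∫ x, (f x) ^ 2
          * Real.log ((f x) ^ 2
              / ∫ y, (f y) ^ 2 * ((1 / 2) * gaussAt m y + (1 / 2) * smUnif m y))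
          * ((1 / 2) * gaussAt m x + (1 / 2) * smUnif m x))
        ≤ 2 * (324 * m ^ 3)
            * ∫ x, (deriv f x) ^ 2 * ((1 / 2) * gaussAt m x + (1 / 2) * smUnif m x) := by
  intro f hf hs
  have hN : 0 < 3 * m + sqrt (2 * π) := by positivity
  have hsq : 2 ≤ sqrt (2 * π) := by
    apply le_sqrt_of_sq_le; nlinarith [pi_gt_three]
  set a : ℝ := 1 / (9 * m ^ 2) with ha
  have a0 : 0 < a := by positivity
  have am : a * m ^ 2 = 1 / 9 := by rw [ha]; field_simp
  have a4 : a ≤ 1 / 144 := by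
    rw [ha]; apply one_div_le_one_div_of_le (by norm_num); nlinarith
  set s : ℝ := 3 / 2 * m with hsd
  set r : ℝ := s / (1 - 2 * a) with hr
  have s0 : 0 < s := by positivity
  have r0 : 0 < r := div_pos s0 (by linarith)
  have hrs : (1 - 2 * a) * r = s := by rw [hr]; field_simp [(by linarith : (1 - 2 * a) ≠ 0)]
  have har : a * r ^ 2 ≤ 1 := by
    have h1 : r ≤ 2 * m := by
      rw [hr, div_le_iff₀ (by linarith), hsd]; nlinarith
    have : a * r ^ 2 ≤ a * (2 * m) ^ 2 := by gcongr
    nlinarith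
  set W : ℝ → ℝ := fun x => a * (x - m / 2) ^ 2 + (1 / 2 - a) *
    ((max (x - m / 2 - r) 0) ^ 2 + (max (-(x - m / 2) - r) 0) ^ 2) with hW
  set W' : ℝ → ℝ := fun x => 2 * a * (x - m / 2) + (1 / 2 - a) *
    (2 * max (x - m / 2 - r) 0 - 2 * max (-(x - m / 2) - r) 0) with hW'
  have dW : ∀ x, HasDerivAt W (W' x) x := by
    intro x
    have d0 : HasDerivAt (fun x : ℝ => x - m / 2) 1 x := (hasDerivAt_id x).sub_const _
    have d1 := (pos_sq_deriv (x - m / 2 - r)).comp x (d0.sub_const r)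
    have d2 := (pos_sq_deriv (-(x - m / 2) - r)).comp x (d0.neg.sub_const r)
    have := ((d0.pow 2).const_mul a).add ((d1.add d2).const_mul (1 / 2 - a))
    refine this.congr_deriv ?_
    simp [hW']; ring
  have cW' : Continuous W' := by simp only [hW']; fun_prop
  have conv : ∀ x y, W x + W' x * (y - x) + (2 * a) / 2 * (y - x) ^ 2 ≤ W y := by
    intro x y
    have h1 := pos_sq_conv (x - m / 2 - r) (y - m / 2 - r)
    have h2 := pos_sq_conv (-(x - m / 2) - r) (-(y - m / 2) - r)
    have h3 := mul_le_mul_of_nonneg_left (add_le_add h1 h2) (by linarith : 0 ≤ 1 / 2 - a)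
    simp only [hW, hW']
    linarith
  set D : ℝ → ℝ := fun x => Metric.infDist x (Set.Icc (-m) (2 * m)) with hD
  have cmp : ∀ x, D x ^ 2 / 2 ≤ W x ∧ W x ≤ D x ^ 2 / 2 + 1 := by
    intro x
    have := pot_compare a s r |x - m / 2| a0 (by linarith) s0 hrs r0 har (abs_nonneg _)
    rw [sq_abs, ← pos_sq_abs _ r r0.le] at this
    simp only [hD, infDist_Icc_sq m x hm]
    exact this
  have cD : Continuous D := Metric.continuous_infDist_pt _
  have gu : ∀ x, exp (-(x - m) ^ 2 / 2) ≤ exp (-(D x) ^ 2 / 2) := by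
    intro x
    have h1 : D x ≤ |x - m| := by
      have := Metric.infDist_le_dist_of_mem (x := x) (s := Set.Icc (-m) (2 * m)) (y := m)
        ⟨by linarith, by linarith⟩
      rwa [Real.dist_eq] at this
    have h2 : D x ^ 2 ≤ |x - m| ^ 2 := by
      have : 0 ≤ D x := Metric.infDist_nonneg
      gcongr
    rw [sq_abs] at h2
    apply exp_le_exp.2; linarith
  have eVW : ∀ x, exp (-(D x) ^ 2 / 2) ≤ 3 * exp (-W x) := by
    intro x
    have h1 : exp (-(D x) ^ 2 / 2) ≤ exp (1 + -W x) := exp_le_exp.2 (by linarith [(cmp x).2])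
    rw [exp_add] at h1
    nlinarith [exp_pos (-W x), exp_one_lt_d9]
  have eWV : ∀ x, exp (-W x) ≤ exp (-(D x) ^ 2 / 2) := fun x =>
    exp_le_exp.2 (by linarith [(cmp x).1])
  set N := 3 * m + sqrt (2 * π) with hNd
  set p : ℝ → ℝ := fun x => (1 / 2) * gaussAt m x + (1 / 2) * smUnif m x with hp
  have gpos : ∀ x, 0 < gaussAt m x := fun x => by unfold gaussAt; positivity
  have upos : ∀ x, 0 < smUnif m x := fun x => by unfold smUnif; positivity
  have cp : Continuous p := by
    have c1 : Continuous (gaussAt m) := by unfold gaussAt; fun_prop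
    have c2 : Continuous (smUnif m) := by
      show Continuous fun x => exp (-(D x) ^ 2 / 2) / (3 * m + sqrt (2 * π))
      fun_prop
    simp only [hp]; fun_prop
  have hsq0 : 0 < sqrt (2 * π) := by linarith
  have main := hs_full (2 * a) (by positivity) W W' f p dW cW' conv hf hs cp
    (fun x => by have := gpos x; have := upos x; simp only [hp]; positivity)
    (3 / 2 * (1 / sqrt (2 * π) + 1 / N)) (2 * N) (by positivity) (by positivity)
    (by
      intro x
      have h1 : gaussAt m x ≤ 3 * exp (-W x) / sqrt (2 * π) := by
        unfold gaussAt; gcongr; exact (gu x).trans (eVW x)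
      have h2 : smUnif m x ≤ 3 * exp (-W x) / N := by
        unfold smUnif; gcongr; exact eVW x
      have h3 : 3 / 2 * (1 / sqrt (2 * π) + 1 / N) * exp (-W x)
        = 1 / 2 * (3 * exp (-W x) / sqrt (2 * π)) + 1 / 2 * (3 * exp (-W x) / N) := by ring
      rw [h3]; simp only [hp]; linarith)
    (by
      intro x
      have h1 : 2 * N * (1 / 2 * smUnif m x) = exp (-(D x) ^ 2 / 2) := by
        unfold smUnif; rw [← hNd]; field_simp; rfl
      have h2 : 0 ≤ 2 * N * (1 / 2 * gaussAt m x) := by have := gpos x; positivity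
      have := eWV x
      simp only [hp]; linarith)
    (((gaussAt_int m).1.const_mul _).add ((smUnif_int m hm).1.const_mul _))
    (by
      simp only [hp]
      rw [integral_add ((gaussAt_int m).1.const_mul _) ((smUnif_int m hm).1.const_mul _),
        integral_const_mul, integral_const_mul, (gaussAt_int m).2, (smUnif_int m hm).2]
      norm_num)
  refine main.trans ?_
  have i0 : 0 ≤ ∫ x, deriv f x ^ 2 * p x := integral_nonneg fun x => by
    have := gpos x; have := upos x; simp only [hp]; positivity
  refine mul_le_mul_of_nonneg_right ?_ i0
  have q1 : 3 / 2 * (1 / sqrt (2 * π) + 1 / N) * (2 * N) / (2 * a)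
      = 27 / 2 * m ^ 2 * (2 + 3 * m / sqrt (2 * π)) := by
    rw [ha]
    have : N / sqrt (2 * π) = 1 + 3 * m / sqrt (2 * π) := by rw [hNd]; field_simp; ring
    have h2 : 3 / 2 * (1 / sqrt (2 * π) + 1 / N) * (2 * N) = 3 * (N / sqrt (2 * π) + 1) := by
      field_simp
    rw [h2, this]; field_simp; ring
  rw [q1]
  have q2 : 3 * m / sqrt (2 * π) ≤ 3 * m / 2 := by gcongr
  have q3 : 27 / 2 * m ^ 2 * (2 + 3 * m / sqrt (2 * π)) ≤ 27 / 2 * m ^ 2 * (2 * m) := by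
    gcongr; linarith
  have : 0 < m ^ 3 := by positivity
  nlinarith
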